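/- arXiv:1701.00466 — 2 statements merged into one kernel-verified Lean document; each statement's English description precedes it below -/
import Mathlib

section
/- Let (Fᵢ)_{i∈ι} be a family of soft sets, each lying in S(𝕏). Then (⋓ᵢ Fᵢ)^ℂ = ⋒ᵢ (Fᵢ^ℂ) (De Morgan law for elementary union and elementary complement). -/
/-!
Membership in `S(𝕏)` makes every point of `F a` the value at `a` of some soft element of `F`, so
the elementary union of such soft sets is the pointwise union (`mem_eUnion_iff`). Hence both sides
of the De Morgan law are generated by the same collection of soft elements, namely the `x` with
`x a ∉ F i a` for all `i` and `a`: on the right-hand side this is because the soft elements of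
`Fᵢ^ℂ` are exactly the functions avoiding `Fᵢ` everywhere (`mem_SE_eCompl_iff`).
-/

namespace SoftPaper

variable {X Y A : Type*}

/-- The set of soft elements of a soft set `F`. -/
def SE (F : A → Set X) : Set (A → X) := {x | ∀ a, x a ∈ F a}

/-- The soft set generated by a collection `B` of soft elements. -/
def SS (B : Set (A → X)) : A → Set X := fun a => {y | ∃ x ∈ B, x a = y}

/-- The null soft set Φ. -/
def Null : A → Set X := fun _ => ∅

/-- The absolute soft set 𝕏. -/
def Abs : A → Set X := fun _ => Set.univ

/-- `F` lies in `S(𝕏)`: it is the null soft set or everywhere nonempty. -/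
def MemSX (F : A → Set X) : Prop := F = Null ∨ ∀ a, (F a).Nonempty

/-- Soft subset relation `F ⊆̃ G`. -/
def Subset (F G : A → Set X) : Prop := ∀ a, F a ⊆ G a

/-- Elementary union of a family of soft sets. -/
def eUnion {ι : Type*} (F : ι → A → Set X) : A → Set X := SS (⋃ i, SE (F i))

/-- Elementary intersection of a family of soft sets. -/
def eInter {ι : Type*} (F : ι → A → Set X) : A → Set X := SS (⋂ i, SE (F i))

/-- Binary elementary union `F ⋓ G`. -/
def eUnion2 (F G : A → Set X) : A → Set X := SS (SE F ∪ SE G)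

/-- Binary elementary intersection `F ⋒ G`. -/
def eInter2 (F G : A → Set X) : A → Set X := SS (SE F ∩ SE G)

/-- Elementary complement `F^ℂ`. -/
def eCompl (F : A → Set X) : A → Set X := SS {x : A → X | ∀ a, x a ∉ F a}

/-- A point of `F a` extends to a soft element of `F` by choosing values at the other
parameters; this is where membership in `S(𝕏)` is needed. -/
theorem MemSX.exists_mem_SE {F : A → Set X} (hF : MemSX F) {a : A} {y : X} (hy : y ∈ F a) :
    ∃ x ∈ SE F, x a = y := by
  classical
  rcases hF with rfl | hne
  · exact hy.elim
  · choose z hz using hne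
    refine ⟨Function.update z a y, fun b => ?_, Function.update_self ..⟩
    by_cases hb : b = a
    · subst hb
      simpa using hy
    · simpa [Function.update_of_ne hb] using hz b

theorem mem_eUnion_iff {ι : Type*} {F : ι → A → Set X} (hF : ∀ i, MemSX (F i)) {a : A} {y : X} :
    y ∈ eUnion F a ↔ ∃ i, y ∈ F i a := by
  constructor
  · rintro ⟨x, hx, rfl⟩
    obtain ⟨i, hi⟩ := Set.mem_iUnion.1 hx
    exact ⟨i, hi a⟩
  · rintro ⟨i, hi⟩
    obtain ⟨x, hx, hxa⟩ := (hF i).exists_mem_SE hi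
    exact ⟨x, Set.mem_iUnion.2 ⟨i, hx⟩, hxa⟩

theorem mem_SE_eCompl_iff {F : A → Set X} {x : A → X} :
    x ∈ SE (eCompl F) ↔ ∀ a, x a ∉ F a := by
  refine ⟨fun hx a => ?_, fun hx a => ⟨x, hx, rfl⟩⟩
  obtain ⟨z, hz, hza⟩ := hx a
  exact hza ▸ hz a

theorem eCompl_eUnion [Nonempty X] [Nonempty A] {ι : Type*}
    (F : ι → A → Set X) (hF : ∀ i, MemSX (F i)) :
    eCompl (eUnion F) = eInter (fun i => eCompl (F i)) := by
  unfold eInter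
  rw [eCompl]
  congr 1
  ext x
  simp only [Set.mem_ofPred_eq, Set.mem_iInter, mem_SE_eCompl_iff, mem_eUnion_iff hF, not_exists]
  exact forall_comm

end SoftPaper
end

section
/- Let τ be a soft topology on (X, A) and let Y₁, …, Yₙ (n ≥ 1) be finitely many soft closed sets. If ⋒_{i=1}^{n} (Yᵢ^ℂ) ≠ Φ, then the elementary union ⋓_{i=1}^{n} Yᵢ is soft closed. -/
/-!
Call a soft set inhabited if it has a soft element. An inhabited soft set is recovered from its
soft elements (`SS_SE`), since a soft element can be changed freely at one parameter. Hence
elementary operations reduce to pointwise ones as soon as the result is inhabited.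

A nonnull `⋒ᵢ Yᵢ^ℂ` supplies a soft element `c` avoiding every `Yᵢ` at every parameter. It makes the
complement of the union inhabited, and it makes all the partial intersections of the `Yᵢᶜ`
inhabited, so that these are pointwise and stay in `τ` by induction (`biInter_mem`). As each
`Yᵢ` lies in `S(𝕏)`, the elementary union is the pointwise union (`eUnion_apply`), and its
elementary complement is the soft set `a ↦ ⋂ᵢ (Yᵢ a)ᶜ`, hence open.
-/

namespace SoftPaper

variable {X Y A : Type*}

/-- A soft topology on `(X, A)`: a collection of soft sets, each in `S(𝕏)`,
containing `Φ` and `𝕏`, closed under elementary unions of arbitrary families of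
members and under binary elementary intersections. -/
structure IsSoftTopology (τ : Set (A → Set X)) : Prop where
  memSX : ∀ F ∈ τ, MemSX F
  null_mem : Null ∈ τ
  abs_mem : Abs ∈ τ
  union_mem : ∀ S ⊆ τ, SS (⋃ F ∈ S, SE F) ∈ τ
  inter_mem : ∀ F ∈ τ, ∀ G ∈ τ, eInter2 F G ∈ τ

/-- `F` is soft closed w.r.t. `τ`. -/
def SoftClosed (τ : Set (A → Set X)) (F : A → Set X) : Prop :=
  MemSX F ∧ MemSX (fun a => (F a)ᶜ) ∧ eCompl F ∈ τ

/-- The soft closure of `F`: the elementary intersection of the family of all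
soft closed sets containing `F`. -/
def softClosure (τ : Set (A → Set X)) (F : A → Set X) : A → Set X :=
  SS (⋂ G ∈ {G : A → Set X | SoftClosed τ G ∧ Subset F G}, SE G)

/-- A soft set with a soft element is generated by its soft elements. -/
theorem SS_SE {F : A → Set X} {c : A → X} (hc : c ∈ SE F) : SS (SE F) = F := by
  classical
  funext a
  ext y
  constructor
  · rintro ⟨x, hx, rfl⟩
    exact hx a
  · intro hy
    refine ⟨Function.update c a y, fun b => ?_, by simp⟩
    by_cases hb : b = a
    · subst hb
      simpa using hy
    · simpa [hb] using hc b

theorem memSX_SS (B : Set (A → X)) : MemSX (SS B) := by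
  rcases B.eq_empty_or_nonempty with rfl | ⟨x, hx⟩
  · left
    funext a
    simp [SS, Null]
  · exact Or.inr fun a => ⟨x a, x, hx, rfl⟩

theorem eCompl_eq {F : A → Set X} {c : A → X} (hc : ∀ a, c a ∉ F a) :
    eCompl F = fun a => (F a)ᶜ :=
  SS_SE (F := fun a => (F a)ᶜ) hc

theorem eUnion_apply {ι : Type*} {F : ι → A → Set X} (hF : ∀ i, MemSX (F i)) (a : A) :
    eUnion F a = ⋃ i, F i a := by
  ext y
  simp only [eUnion, SS, Set.mem_iUnion, Set.mem_ofPred_eq]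
  constructor
  · rintro ⟨x, ⟨i, hi⟩, rfl⟩
    exact ⟨i, hi a⟩
  · rintro ⟨i, hy⟩
    rcases hF i with h0 | hne
    · rw [h0] at hy
      exact hy.elim
    · choose c hc using hne
      have hy' : y ∈ SS (SE (F i)) a := by rwa [SS_SE (F := F i) hc]
      obtain ⟨x, hx, hxa⟩ := hy'
      exact ⟨x, ⟨i, hx⟩, hxa⟩

/-- Finite pointwise intersections of soft open sets with a common soft element are soft open. -/
theorem biInter_mem {ι : Type*} {τ : Set (A → Set X)} (hτ : IsSoftTopology τ)
    {F : ι → A → Set X} (hF : ∀ i, F i ∈ τ) {c : A → X} (hc : ∀ i, c ∈ SE (F i))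
    (s : Finset ι) : (fun a => ⋂ i ∈ s, F i a) ∈ τ := by
  classical
  induction s using Finset.induction_on with
  | empty =>
    have h0 : (fun a => ⋂ i ∈ (∅ : Finset ι), F i a) = Abs := by
      funext a
      simp [Abs]
    exact h0 ▸ hτ.abs_mem
  | insert i s _ ih =>
    have h := hτ.inter_mem _ (hF i) _ ih
    have hinter : SE (F i) ∩ SE (fun a => ⋂ j ∈ s, F j a)
        = SE (fun a => ⋂ j ∈ insert i s, F j a) := by
      ext x
      simp [SE, forall_and]
    have hcs : c ∈ SE (fun a => ⋂ j ∈ insert i s, F j a) := fun a =>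
      Set.mem_iInter₂.2 fun j _ => hc j a
    rwa [eInter2, hinter, SS_SE hcs] at h

theorem softClosed_eUnion_of_finite [Nonempty X] [Nonempty A]
    (τ : Set (A → Set X)) (hτ : IsSoftTopology τ) (n : ℕ) (hn : 1 ≤ n)
    (Y : Fin n → A → Set X) (hY : ∀ i, SoftClosed τ (Y i))
    (h : eInter (fun i => eCompl (Y i)) ≠ Null) :
    SoftClosed τ (eUnion Y) := by
  obtain ⟨c, hc⟩ : (⋂ i, SE (eCompl (Y i))).Nonempty := by
    rw [Set.nonempty_iff_ne_empty]
    intro h0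
    apply h
    funext a
    simp [eInter, h0, SS, Null]
  have hcY : ∀ i a, c a ∉ Y i a := by
    intro i a
    obtain ⟨x, hx, hxa⟩ := Set.mem_iInter.1 hc i a
    exact hxa ▸ hx a
  have hcU : ∀ a, c a ∉ eUnion Y a := by
    intro a
    rw [eUnion_apply fun i => (hY i).1]
    simpa using fun i => hcY i a
  refine ⟨memSX_SS _, Or.inr fun a => ⟨c a, hcU a⟩, ?_⟩
  have hopen := biInter_mem hτ (fun i => (hY i).2.2) (fun i => Set.mem_iInter.1 hc i)
    Finset.univ
  rw [eCompl_eq hcU]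
  convert hopen using 2 with a
  rw [eUnion_apply fun i => (hY i).1, Set.compl_iUnion]
  simp [fun i => eCompl_eq (hcY i)]

end SoftPaper
end
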